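/- Let 𝕏 ⊆ ℙ^n_K be a 0-dimensional locally Gorenstein scheme with Δ_𝕏 = 1. Then 𝕏 is an almost Gorenstein scheme if and only if 𝕏 is a nearly Gorenstein Cayley–Bacharach scheme. -/

import Mathlib

noncomputable section

/-! An algebraic model for a 0-dimensional subscheme `𝕏 ⊆ ℙⁿ_K` whose support avoids
the hyperplane `Z(X₀)`.  The scheme is recorded through the local rings
`𝒪_{𝕏,p_j}` at the points `p_1, …, p_s` of its support, together with the germ map
sending a homogeneous polynomial `F` of degree `i` to the tuple of germs
`(F_{p_1}, …, F_{p_s})`; this is the degree-`i` component of the injection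
`ĩ : R → Q^h(R) ≅ ∏_j 𝒪_{𝕏,p_j}[T_j, T_j⁻¹]`, where every graded component of
`Q^h(R)` is identified with `Γ = ∏_j 𝒪_{𝕏,p_j}` by dropping the powers of the `T_j`.
Since `x₀` has germ `1` at every point, the homogeneous coordinate ring
`R = P/I_𝕏` is faithfully encoded by the chain of subspaces
`R_i ≅ V_i = germ(P_i) ⊆ Γ` (with `V_i ⊆ V_{i+1}`, and `V_i = Γ` for `i ≫ 0`). -/

/-- The data of one (fat) point of a 0-dimensional scheme: a finite local `K`-algebra. -/
structure PointData (K : Type) [Field K] : Type 1 where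
  carrier : Type
  [ring : CommRing carrier]
  [alg : Algebra K carrier]
  [loc : IsLocalRing carrier]
  [findim : FiniteDimensional K carrier]

attribute [instance] PointData.ring PointData.alg PointData.loc PointData.findim

/-- A model of a 0-dimensional subscheme of `ℙⁿ_K`, no point of whose support lies
on `Z(X₀)` (coordinates being chosen so that each point has `X₀`-coordinate 1, the
germ of `x₀` at every point is `1`). -/
structure ZeroDimScheme (K : Type) [Field K] (n : ℕ) : Type 1 where
  /-- the number of points in the support -/
  s : ℕ
  spos : 0 < s
  /-- the local rings `𝒪_{𝕏,p_j}` -/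
  pt : Fin s → PointData K
  /-- the germ map: for `F` homogeneous of degree `i` this is the degree-`i`
  component of `ĩ : R → Q^h(R)`, i.e. `F ↦ (F_{p_1}, …, F_{p_s})` -/
  germ : MvPolynomial (Fin (n + 1)) K →ₐ[K] ∀ j, (pt j).carrier
  /-- the germ of `X₀` at each point is `1` -/
  germ_X0 : germ (MvPolynomial.X 0) = 1
  /-- in all large degrees, the germ map is surjective onto `∏_j 𝒪_{𝕏,p_j}`
  (this characterizes `I_𝕏` as the full homogeneous vanishing ideal of the scheme) -/
  eventually_surj : ∃ N : ℕ, ∀ i, N ≤ i →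
    Submodule.map germ.toLinearMap
      (MvPolynomial.homogeneousSubmodule (Fin (n + 1)) K i) = ⊤

namespace ZeroDimScheme

variable {K : Type} [Field K] {n : ℕ}

/-- `Γ = ∏_j 𝒪_{𝕏,p_j}`, the common model for every graded component of `Q^h(R)`. -/
abbrev Gamma (S : ZeroDimScheme K n) : Type := ∀ j, (S.pt j).carrier

variable (S : ZeroDimScheme K n)

/-- `V i ⊆ Γ` is the image of the degree-`i` component `R_i` of the homogeneous
coordinate ring `R` under (the degree-`i` component of) `ĩ`; we identify `R_i ≅ V i`. -/
def V (i : ℕ) : Submodule K S.Gamma :=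
  Submodule.map S.germ.toLinearMap
    (MvPolynomial.homogeneousSubmodule (Fin (n + 1)) K i)

/-- `R_i` for `i : ℤ` (zero in negative degrees). -/
def Vz (i : ℤ) : Submodule K S.Gamma := if 0 ≤ i then S.V i.toNat else ⊥

/-- `deg 𝕏 = Σ_j dim_K 𝒪_{𝕏,p_j}`. -/
def degX : ℕ := Module.finrank K S.Gamma

/-- The Hilbert function `HF_𝕏(i) = dim_K R_i`. -/
def HF (i : ℕ) : ℕ := Module.finrank K (S.V i)

/-- The Hilbert function on `ℤ`. -/
def HFz (i : ℤ) : ℕ := Module.finrank K (S.Vz i)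

/-- The regularity index `r_𝕏`: the least `r` with `HF_𝕏(i) = deg 𝕏` for all `i ≥ r`. -/
def rX : ℕ := sInf {r : ℕ | ∀ i, r ≤ i → S.HF i = S.degX}

/-- `κ_j = dim_K κ(p_j)`, the residue field of `𝕏` at `p_j`. -/
def kappa (j : Fin S.s) : ℕ :=
  Module.finrank K
    ((S.pt j).carrier ⧸
      Submodule.restrictScalars K (IsLocalRing.maximalIdeal (S.pt j).carrier))

/-- `sj` is a socle element of `𝒪_{𝕏,p_j}`, i.e. `sj ∈ Ann(𝔪_{𝕏,p_j})`.  By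
Proposition 1.2, the maximal `p_j`-subschemes `𝕐 ⊆ 𝕏` correspond 1-1 to the ideals
of `Γ` generated by `(0,…,0,sj,0,…,0)` with `sj` a *nonzero* socle element. -/
def IsSocle (j : Fin S.s) (sj : (S.pt j).carrier) : Prop :=
  ∀ b ∈ IsLocalRing.maximalIdeal (S.pt j).carrier, sj * b = 0

/-- The ideal `U = ⟨(0,…,0,sj,0,…,0)⟩` of `Γ` corresponding to the maximal
`p_j`-subscheme `𝕐` determined by the socle element `sj`; one has `I_{𝕐/𝕏} = ĩ⁻¹(U)`. -/
def sepIdeal (j : Fin S.s) (sj : (S.pt j).carrier) : Submodule K S.Gamma :=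
  Submodule.restrictScalars K (Ideal.span {(Pi.single j sj : S.Gamma)})

/-- The degree-`i` component `(I_{𝕐/𝕏})_i = R_i ∩ ĩ⁻¹(U)` of the ideal of the maximal
`p_j`-subscheme `𝕐` (given by the socle element `sj`) in `R`. -/
def IY (j : Fin S.s) (sj : (S.pt j).carrier) (i : ℕ) : Submodule K S.Gamma :=
  S.V i ⊓ S.sepIdeal j sj

/-- `(I_{𝕐/𝕏})_i` for `i : ℤ`. -/
def IYz (j : Fin S.s) (sj : (S.pt j).carrier) (i : ℤ) : Submodule K S.Gamma :=
  S.Vz i ⊓ S.sepIdeal j sj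

/-- The Hilbert function `HF_𝕐(i) = HF_𝕏(i) - dim_K (I_{𝕐/𝕏})_i` of the maximal
`p_j`-subscheme `𝕐` given by the socle element `sj`. -/
def HFY (j : Fin S.s) (sj : (S.pt j).carrier) (i : ℕ) : ℕ :=
  S.HF i - Module.finrank K (S.IY j sj i)

/-- `HF_𝕐` on `ℤ`. -/
def HFYz (j : Fin S.s) (sj : (S.pt j).carrier) (i : ℤ) : ℕ :=
  S.HFz i - Module.finrank K (S.IYz j sj i)

/-- `α_{𝕐/𝕏} = min {i | (I_{𝕐/𝕏})_i ≠ 0}`. -/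
def alphaY (j : Fin S.s) (sj : (S.pt j).carrier) : ℕ :=
  sInf {i : ℕ | S.IY j sj i ≠ ⊥}

/-- `μ(a) = min {i | (0,…,0,a T_j^i,0,…,0) ∈ ĩ(R)}` for `a ∈ 𝒪_{𝕏,p_j}`. -/
def mu (j : Fin S.s) (a : (S.pt j).carrier) : ℕ :=
  sInf {i : ℕ | (Pi.single j a : S.Gamma) ∈ S.V i}

/-- `μ_{𝕐/𝕏}`, the maximal degree of a minimal separator of the maximal
`p_j`-subscheme `𝕐` given by the socle element `sj`; independently of all choices it
equals `max {μ(a·sj) | a ∈ 𝒪_{𝕏,p_j}, a·sj ≠ 0}`. -/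
def muY (j : Fin S.s) (sj : (S.pt j).carrier) : ℕ :=
  sSup {m : ℕ | ∃ a : (S.pt j).carrier, a * sj ≠ 0 ∧ m = S.mu j (a * sj)}

/-- `deg_𝕏(p_j) = min {μ_{𝕐/𝕏} | 𝕐 a maximal p_j-subscheme of 𝕏}`. -/
def degP (j : Fin S.s) : ℕ :=
  sInf {m : ℕ | ∃ sj : (S.pt j).carrier, S.IsSocle j sj ∧ sj ≠ 0 ∧ m = S.muY j sj}

/-- `𝕏` has the Cayley–Bacharach property of degree `d`: `deg_𝕏(p_j) ≥ d + 1` for all `j`. -/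
def CBP (d : ℕ) : Prop := ∀ j : Fin S.s, d + 1 ≤ S.degP j

/-- `𝕏` is a Cayley–Bacharach scheme: it has `CBP(r_𝕏 - 1)`. -/
def CayleyBacharach : Prop := S.CBP (S.rX - 1)

/-- The residue class map `𝒪_{𝕏,p_j} → κ(p_j)` as a `K`-linear map. -/
def resQ (j : Fin S.s) :
    (S.pt j).carrier →ₗ[K]
      ((S.pt j).carrier ⧸
        Submodule.restrictScalars K (IsLocalRing.maximalIdeal (S.pt j).carrier)) :=
  (Submodule.restrictScalars K (IsLocalRing.maximalIdeal (S.pt j).carrier)).mkQ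

/-- The residue classes of `e 0, …, e (κ_j - 1)` form a `K`-basis of `κ(p_j)`. -/
def IsResidueBasis (j : Fin S.s) {m : ℕ} (e : Fin m → (S.pt j).carrier) : Prop :=
  LinearIndependent K (fun k => S.resQ j (e k)) ∧
    Submodule.span K (Set.range fun k => S.resQ j (e k)) = ⊤

/-- A family `τ_j : 𝒪_{𝕏,p_j} → K` of trace maps: each `τ_j` is a generator of
`Hom_K(𝒪_{𝕏,p_j}, K)` as an `𝒪_{𝕏,p_j}`-module.  Such a family exists iff `𝕏` is
locally Gorenstein, and it induces a homogeneous trace map `σ` of degree zero of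
`Q^h(R)/L₀` (componentwise). -/
def IsTraceFamily (τ : ∀ j, (S.pt j).carrier →ₗ[K] K) : Prop :=
  ∀ j, Function.Bijective
    (fun a : (S.pt j).carrier => (τ j).comp (LinearMap.mulRight K a))

/-- The total trace `Γ → K`, `y ↦ Σ_j τ_j (y_j)`; on the degree-`i` component of
`Q^h(R)` the trace map `σ` is `q ↦ (Ttot τ q)·x₀^i`. -/
def Ttot (τ : ∀ j, (S.pt j).carrier →ₗ[K] K) : S.Gamma →ₗ[K] K :=
  ∑ j : Fin S.s, (τ j).comp (LinearMap.proj j)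

/-- The degree-`k` component `(𝔠^σ_𝕏)_k ⊆ Q^h(R)_k ≅ Γ` of the Dedekind complementary
module: `g ∈ (𝔠^σ_𝕏)_k` iff `σ(g · R) ⊆ K[x₀]`, i.e. `Ttot τ (g·x) = 0` whenever
`x ∈ R_i` with `k + i < 0`. -/
def Cmod (τ : ∀ j, (S.pt j).carrier →ₗ[K] K) (k : ℤ) : Submodule K S.Gamma :=
  ⨅ (i : ℕ) (_ : k + (i : ℤ) < 0) (x : S.Gamma) (_ : x ∈ S.V i),
    LinearMap.ker ((S.Ttot τ).comp (LinearMap.mulRight K x))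

/-- The degree-`i` component `(δ^σ_𝕏)_i ⊆ Q^h(R)_i ≅ Γ` of the Dedekind different
`δ^σ_𝕏 = {f ∈ Q^h(R) | f · 𝔠^σ_𝕏 ⊆ R}`. -/
def delta (τ : ∀ j, (S.pt j).carrier →ₗ[K] K) (i : ℤ) : Submodule K S.Gamma :=
  ⨅ (k : ℤ) (g : S.Gamma) (_ : g ∈ S.Cmod τ k),
    Submodule.comap (LinearMap.mulRight K g) (S.Vz (i + k))

/-- The Hilbert function of the Dedekind different. -/
def HFdelta (τ : ∀ j, (S.pt j).carrier →ₗ[K] K) (i : ℤ) : ℕ :=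
  Module.finrank K (S.delta τ i)

/-- `𝕏` has minimal Dedekind different: `δ^σ_𝕏 = ⊕_{i ≥ 2 r_𝕏} R_i`
(recall `R_i ≅ Γ` for `i ≥ r_𝕏`). -/
def MinimalDedekind (τ : ∀ j, (S.pt j).carrier →ₗ[K] K) : Prop :=
  ∀ i : ℤ, S.delta τ i = if 2 * (S.rX : ℤ) ≤ i then ⊤ else ⊥

/-- The degree-`i` component (`i ≥ 0`) of the conductor
`𝔉_{R̃/R} = {f ∈ R̃ | f·R̃ ⊆ R}` of `R` in `R̃ = ∏_j 𝒪_{𝕏,p_j}[T_j]`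
(whose degree-`i` component is all of `Γ` for every `i ≥ 0`). -/
def cond (i : ℕ) : Submodule K S.Gamma :=
  ⨅ y : S.Gamma, Submodule.comap (LinearMap.mulRight K y) (S.V i)

/-- The conductor on `ℤ` (zero in negative degrees, where `R̃` vanishes). -/
def condZ (i : ℤ) : Submodule K S.Gamma := if 0 ≤ i then S.cond i.toNat else ⊥

/-- The degree-`i` component of the trace `tr(𝔠^σ_𝕏) = δ^σ_𝕏 · 𝔠^σ_𝕏` of the
Dedekind complementary module. -/
def trC (τ : ∀ j, (S.pt j).carrier →ₗ[K] K) (i : ℤ) : Submodule K S.Gamma :=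
  ⨆ (a : ℤ) (b : ℤ) (_ : a + b = i), S.delta τ a * S.Cmod τ b

/-- `𝕏` is nearly Gorenstein: `𝔪 ⊆ tr(𝔠^σ_𝕏)`. -/
def NearlyGorenstein (τ : ∀ j, (S.pt j).carrier →ₗ[K] K) : Prop :=
  ∀ i : ℤ, 1 ≤ i → S.Vz i ≤ S.trC τ i

/-- `𝕏` is almost Gorenstein: there is an exact sequence of graded `R`-modules
`0 → R → 𝔠^σ_𝕏(-r_𝕏) → C → 0` with `𝔪·C = 0`.  A degree-zero graded injection
`R → 𝔠^σ_𝕏(-r_𝕏)` is multiplication by an element `g ∈ (𝔠^σ_𝕏)_{-r_𝕏}` with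
`Ann_R(g) = 0`, and `𝔪·C = 0` means `𝔪 · 𝔠^σ_𝕏(-r_𝕏) ⊆ g·R`. -/
def AlmostGorenstein (τ : ∀ j, (S.pt j).carrier →ₗ[K] K) : Prop :=
  ∃ g ∈ S.Cmod τ (-(S.rX : ℤ)),
    (∀ i : ℕ, ∀ x ∈ S.V i, x * g = 0 → x = 0) ∧
    (∀ a : ℕ, 1 ≤ a → ∀ x ∈ S.V a, ∀ k : ℤ, ∀ h ∈ S.Cmod τ k,
      x * h ∈ Submodule.map (LinearMap.mulRight K g) (S.Vz ((a : ℤ) + k + (S.rX : ℤ))))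

/-- `𝕏` is arithmetically Gorenstein, i.e. `R` is a Gorenstein ring; equivalently the
canonical module is free of rank one: `𝔠^σ_𝕏 = g·R` for some `g ∈ (𝔠^σ_𝕏)_{-r_𝕏}`. -/
def ArithGorenstein (τ : ∀ j, (S.pt j).carrier →ₗ[K] K) : Prop :=
  ∃ g ∈ S.Cmod τ (-(S.rX : ℤ)),
    ∀ k : ℤ, S.Cmod τ k = Submodule.map (LinearMap.mulRight K g) (S.Vz (k + (S.rX : ℤ)))

/-- `𝕏` is level: the socle of `R̄ = R/⟨x₀⟩` equals `R̄_{r_𝕏}`, i.e. no nonzero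
homogeneous element of `R̄` of degree `< r_𝕏` is annihilated by `𝔪̄` (recall
`R̄_i ≅ V i / V (i-1)` and `x₀`-multiplication preserves germs). -/
def Level : Prop :=
  ∀ i : ℕ, i < S.rX → ∀ x ∈ S.V i,
    (∀ a : ℕ, 1 ≤ a → ∀ y ∈ S.V a, x * y ∈ S.Vz ((i : ℤ) + (a : ℤ) - 1)) →
      x ∈ S.Vz ((i : ℤ) - 1)

/-- The subspace `{x ∈ Γ | x_k = 0 for k ≠ j}` of `Γ`: the degreewise model for the
ideal of the subscheme `𝕐_j ⊆ 𝕏` with `I_{𝕐_j} = ∩_{k ≠ j} I_k`. -/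
def Wj (j : Fin S.s) : Submodule K S.Gamma :=
  ⨅ (k : Fin S.s) (_ : k ≠ j),
    LinearMap.ker (LinearMap.proj k : S.Gamma →ₗ[K] (S.pt k).carrier)

/-- `(I_{𝕐_j/𝕏})_i` for the subscheme `𝕐_j` complementary to `p_j`. -/
def IW (j : Fin S.s) (i : ℕ) : Submodule K S.Gamma := S.V i ⊓ S.Wj j

/-- The Hilbert function of the subscheme `𝕐_j` complementary to `p_j`. -/
def HFW (j : Fin S.s) (i : ℕ) : ℕ := S.HF i - Module.finrank K (S.IW j i)

/-- `α_{𝕐_j/𝕏}` for the subscheme `𝕐_j` complementary to `p_j`. -/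
def alphaW (j : Fin S.s) : ℕ := sInf {i : ℕ | S.IW j i ≠ ⊥}

/-- The subspace `{x ∈ Γ | x_k = 0 for k ∉ {j₁, j₂}}` of `Γ`: the degreewise model for
the ideal in `R` of the subscheme of the reduced scheme `𝕏` complementary to `{p_{j₁}, p_{j₂}}`. -/
def Wpair (j1 j2 : Fin S.s) : Submodule K S.Gamma :=
  ⨅ (k : Fin S.s) (_ : k ≠ j1) (_ : k ≠ j2),
    LinearMap.ker (LinearMap.proj k : S.Gamma →ₗ[K] (S.pt k).carrier)

/-- The homogeneous vanishing ideal `I_𝕏 ⊆ P`. -/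
def IX : Ideal (MvPolynomial (Fin (n + 1)) K) :=
  Ideal.span {F | (∃ i : ℕ, F ∈ MvPolynomial.homogeneousSubmodule (Fin (n + 1)) K i) ∧
    S.germ F = 0}

/-- The `n×n`-minor (Jacobian determinant with respect to `X_1, …, X_n`) of an
`n`-tuple of polynomials. -/
def jacMinor (Fs : Fin n → MvPolynomial (Fin (n + 1)) K) : MvPolynomial (Fin (n + 1)) K :=
  Matrix.det (Matrix.of fun a b : Fin n => MvPolynomial.pderiv (Fin.succ b) (Fs a))

/-- The preimage in `P` of the Kähler different `ϑ_𝕏 ⊆ R`: the ideal generated by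
`I_𝕏` together with all `n×n` minors of the Jacobian matrix of elements of `I_𝕏`. -/
def KaehlerIdeal : Ideal (MvPolynomial (Fin (n + 1)) K) :=
  S.IX ⊔ Ideal.span {m | ∃ Fs : Fin n → MvPolynomial (Fin (n + 1)) K,
    (∀ a, Fs a ∈ S.IX) ∧ m = jacMinor Fs}

/-- The degree-`i` component of the Kähler different `ϑ_𝕏 ⊆ R`, viewed inside `Γ`. -/
def thetaPiece (i : ℕ) : Submodule K S.Gamma :=
  Submodule.map S.germ.toLinearMap
    (Submodule.restrictScalars K S.KaehlerIdeal ⊓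
      MvPolynomial.homogeneousSubmodule (Fin (n + 1)) K i)

end ZeroDimScheme

end
namespace ZeroDimScheme

variable {K : Type} [Field K] {n : ℕ} (S : ZeroDimScheme K n)

lemma aux_V_mul {a b : ℕ} {x y : S.Gamma} (hx : x ∈ S.V a) (hy : y ∈ S.V b) :
    x * y ∈ S.V (a + b) := by
  obtain ⟨p, hp, rfl⟩ := hx
  obtain ⟨q, hq, rfl⟩ := hy
  refine ⟨p * q, ?_, by simp⟩
  exact MvPolynomial.IsHomogeneous.mul hp hq

lemma aux_V_succ (a : ℕ) : S.V a ≤ S.V (a + 1) := by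
  intro x hx
  have h1 : (1 : S.Gamma) ∈ S.V 1 :=
    ⟨MvPolynomial.X 0, MvPolynomial.isHomogeneous_X _ _, S.germ_X0⟩
  simpa using S.aux_V_mul hx h1

lemma aux_V_mono : Monotone S.V := monotone_nat_of_le_succ S.aux_V_succ

lemma aux_Vz_nat (a : ℕ) : S.Vz (a : ℤ) = S.V a := by simp [Vz]

lemma aux_Vz_neg {a : ℤ} (h : a < 0) : S.Vz a = ⊥ := by
  simp [Vz, not_le.mpr h]

lemma aux_Vz_mul {a b : ℤ} {x y : S.Gamma} (hx : x ∈ S.Vz a) (hy : y ∈ S.Vz b) :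
    x * y ∈ S.Vz (a + b) := by
  rcases lt_or_ge a 0 with ha | ha
  · rw [S.aux_Vz_neg ha, Submodule.mem_bot] at hx
    simp [hx]
  rcases lt_or_ge b 0 with hb | hb
  · rw [S.aux_Vz_neg hb, Submodule.mem_bot] at hy
    simp [hy]
  lift a to ℕ using ha
  lift b to ℕ using hb
  rw [aux_Vz_nat] at hx hy
  rw [← Nat.cast_add, aux_Vz_nat]
  exact S.aux_V_mul hx hy

lemma aux_V_zero {x : S.Gamma} (hx : x ∈ S.V 0) : ∃ c : K, x = c • (1 : S.Gamma) := by
  obtain ⟨p, hp, rfl⟩ := hx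
  have hp' : p.totalDegree = 0 := by
    have : p.IsHomogeneous 0 := hp
    exact Nat.le_zero.mp this.totalDegree_le
  rw [MvPolynomial.totalDegree_eq_zero_iff_eq_C] at hp'
  refine ⟨p.coeff 0, ?_⟩
  rw [hp']
  change S.germ (algebraMap K _ _) = _
  rw [AlgHom.commutes, Algebra.algebraMap_eq_smul_one]
  simp

lemma aux_V_succ_le (a : ℕ) : S.V (a + 1) ≤ S.V a * S.V 1 := by
  unfold V
  rw [← MvPolynomial.homogeneousSubmodule_one_pow _ (a + 1), pow_succ,
    MvPolynomial.homogeneousSubmodule_one_pow, ← Submodule.map_mul]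

lemma aux_HF_top {i : ℕ} (h : S.V i = ⊤) : S.HF i = S.degX := by
  unfold HF degX
  rw [h]
  exact finrank_top K _

lemma aux_rX : ∀ i, S.rX ≤ i → S.V i = ⊤ := by
  have hne : {r : ℕ | ∀ i, r ≤ i → S.HF i = S.degX}.Nonempty := by
    obtain ⟨N, hN⟩ := S.eventually_surj
    refine ⟨N, fun i hi => ?_⟩
    have : S.V i = ⊤ := hN i hi
    exact S.aux_HF_top this
  have h := Nat.sInf_mem hne
  intro i hi
  exact Submodule.eq_top_of_finrank_eq (h i hi)

lemma aux_rX_pos (hΔ : S.degX - S.HF (S.rX - 1) = 1) : 1 ≤ S.rX := by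
  by_contra h
  have h0 : S.rX = 0 := by omega
  have := S.aux_HF_top (S.aux_rX (S.rX - 1) (by omega))
  omega

lemma aux_codim (hΔ : S.degX - S.HF (S.rX - 1) = 1) {z : S.Gamma}
    (hz : z ∉ S.V (S.rX - 1)) (x : S.Gamma) :
    ∃ v ∈ S.V (S.rX - 1), ∃ c : K, x = v + c • z := by
  have hlt : S.V (S.rX - 1) < S.V (S.rX - 1) ⊔ Submodule.span K {z} := by
    refine lt_of_le_of_ne le_sup_left fun h => hz ?_
    rw [h]
    exact (le_sup_right : _ ≤ S.V (S.rX - 1) ⊔ _) (Submodule.mem_span_singleton_self z)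
  have h1 := Submodule.finrank_lt_finrank_of_lt hlt
  have h2 := Submodule.finrank_le (S.V (S.rX - 1) ⊔ Submodule.span K {z})
  have htop : S.V (S.rX - 1) ⊔ Submodule.span K {z} = ⊤ := by
    apply Submodule.eq_top_of_finrank_eq
    unfold degX HF at hΔ
    omega
  have hx : x ∈ S.V (S.rX - 1) ⊔ Submodule.span K {z} := by rw [htop]; trivial
  obtain ⟨v, hv, w, hw, rfl⟩ := Submodule.mem_sup.mp hx
  obtain ⟨c, rfl⟩ := Submodule.mem_span_singleton.mp hw
  exact ⟨v, hv, c, rfl⟩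

variable {S} {τ : ∀ j, (S.pt j).carrier →ₗ[K] K}

lemma aux_T_single (j : Fin S.s) (y : (S.pt j).carrier) :
    S.Ttot τ (Pi.single j y) = τ j y := by
  simp only [Ttot, LinearMap.sum_apply, LinearMap.comp_apply, LinearMap.proj_apply]
  rw [Finset.sum_eq_single j]
  · simp
  · intro k _ hk
    simp [Pi.single_eq_of_ne hk]
  · simp

lemma aux_T_mul_single (j : Fin S.s) (y : (S.pt j).carrier) (g : S.Gamma) :
    S.Ttot τ (g * Pi.single j y) = τ j (g j * y) := by
  rw [← aux_T_single (τ := τ)]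
  congr 1
  ext k
  by_cases hk : k = j
  · subst hk; simp
  · simp [Pi.single_eq_of_ne hk]

lemma aux_tau_nondeg (hτ : S.IsTraceFamily τ) (j : Fin S.s) (y : (S.pt j).carrier)
    (h : ∀ a, τ j (a * y) = 0) : y = 0 := by
  apply (hτ j).1
  ext a
  simp [h a]

lemma aux_T_nondeg (hτ : S.IsTraceFamily τ) (g : S.Gamma)
    (h : ∀ x, S.Ttot τ (g * x) = 0) : g = 0 := by
  ext j
  apply aux_tau_nondeg hτ j
  intro a
  rw [mul_comm, ← aux_T_mul_single, h]

lemma aux_T_surj (hτ : S.IsTraceFamily τ) (φ : S.Gamma →ₗ[K] K) :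
    ∃ g : S.Gamma, ∀ x, S.Ttot τ (g * x) = φ x := by
  choose g hg using fun j => (hτ j).2 (φ.comp (LinearMap.single K (fun j => (S.pt j).carrier) j))
  refine ⟨g, fun x => ?_⟩
  have : x = ∑ j, Pi.single j (x j) := (Finset.univ_sum_single x).symm
  rw [this, Finset.mul_sum, map_sum, map_sum]
  refine Finset.sum_congr rfl fun j _ => ?_
  rw [aux_T_mul_single, mul_comm]
  have := LinearMap.congr_fun (hg j) (x j)
  simpa using this

lemma aux_mem_C {k : ℤ} {g : S.Gamma} : g ∈ S.Cmod τ k ↔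
    ∀ i : ℕ, k + (i : ℤ) < 0 → ∀ x ∈ S.V i, S.Ttot τ (g * x) = 0 := by
  simp [Cmod, Submodule.mem_iInf]

lemma aux_mem_C_r (hr : 1 ≤ S.rX) {g : S.Gamma} : g ∈ S.Cmod τ (-(S.rX : ℤ)) ↔
    ∀ x ∈ S.V (S.rX - 1), S.Ttot τ (g * x) = 0 := by
  rw [aux_mem_C]
  constructor
  · intro h
    exact h _ (by omega)
  · intro h i hi x hx
    exact h x (S.aux_V_mono (by omega : i ≤ S.rX - 1) hx)

lemma aux_C_bot (hτ : S.IsTraceFamily τ) {k : ℤ} (hk : k < -(S.rX : ℤ)) {g : S.Gamma}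
    (hg : g ∈ S.Cmod τ k) : g = 0 := by
  rw [aux_mem_C] at hg
  apply aux_T_nondeg hτ
  intro x
  exact hg S.rX (by omega) x (by rw [S.aux_rX _ le_rfl]; trivial)

lemma aux_mem_delta {i : ℤ} {f : S.Gamma} : f ∈ S.delta τ i ↔
    ∀ k, ∀ g ∈ S.Cmod τ k, f * g ∈ S.Vz (i + k) := by
  simp [delta, Submodule.mem_iInf]

lemma aux_socle (S : ZeroDimScheme K n) (j : Fin S.s) :
    ∃ sj : (S.pt j).carrier, S.IsSocle j sj ∧ sj ≠ 0 := by
  have : IsArtinianRing (S.pt j).carrier := IsArtinianRing.of_finite K _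
  have hnil : ∃ m, IsLocalRing.maximalIdeal (S.pt j).carrier ^ m = ⊥ := by
    obtain ⟨m, hm⟩ := IsArtinianRing.isNilpotent_jacobson_bot (R := (S.pt j).carrier)
    refine ⟨m, ?_⟩
    rw [← IsLocalRing.jacobson_eq_maximalIdeal ⊥ bot_ne_top]
    exact hm
  classical
  have h1 := Nat.find_spec hnil
  have hpos : Nat.find hnil ≠ 0 := by
    intro h0
    rw [h0, pow_zero, Ideal.one_eq_top] at h1
    exact top_ne_bot h1
  obtain ⟨m, hm⟩ := Nat.exists_eq_succ_of_ne_zero hpos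
  have h2 := Nat.find_min hnil (m := m) (by omega)
  obtain ⟨y, hy, hy0⟩ := Submodule.exists_mem_ne_zero_of_ne_bot h2
  refine ⟨y, fun b hb => ?_, hy0⟩
  rw [hm, pow_succ] at h1
  have := Ideal.mul_mem_mul hy hb
  rw [h1] at this
  simpa using this

lemma aux_mu_le (S : ZeroDimScheme K n) (j : Fin S.s) (a : (S.pt j).carrier) :
    S.mu j a ≤ S.rX :=
  Nat.sInf_le (by
    change _ ∈ S.V S.rX
    rw [S.aux_rX _ le_rfl]; trivial)

lemma aux_le_mu (j : Fin S.s) (a : (S.pt j).carrier) (hr : 1 ≤ S.rX) :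
    S.rX ≤ S.mu j a ↔ (Pi.single j a : S.Gamma) ∉ S.V (S.rX - 1) := by
  constructor
  · intro h hmem
    have : S.mu j a ≤ S.rX - 1 := Nat.sInf_le hmem
    omega
  · intro h
    refine le_csInf ⟨S.rX, ?_⟩ ?_
    · change _ ∈ S.V S.rX
      rw [S.aux_rX _ le_rfl]; trivial
    · intro b hb
      by_contra hlt
      exact h (S.aux_V_mono (by omega : b ≤ S.rX - 1) hb)

lemma aux_le_muY (j : Fin S.s) (sj : (S.pt j).carrier) (hr : 1 ≤ S.rX) (h0 : sj ≠ 0) :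
    S.rX ≤ S.muY j sj ↔ ∃ a, (Pi.single j (a * sj) : S.Gamma) ∉ S.V (S.rX - 1) := by
  have hbdd : BddAbove {m : ℕ | ∃ a : (S.pt j).carrier, a * sj ≠ 0 ∧ m = S.mu j (a * sj)} := by
    refine ⟨S.rX, ?_⟩
    rintro m ⟨a, _, rfl⟩
    exact aux_mu_le S j _
  constructor
  · intro h
    have hne : {m : ℕ | ∃ a : (S.pt j).carrier, a * sj ≠ 0 ∧ m = S.mu j (a * sj)}.Nonempty :=
      ⟨_, 1, by simpa using h0, rfl⟩
    obtain ⟨a, _, hm⟩ := Nat.sSup_mem hne hbdd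
    refine ⟨a, (aux_le_mu j _ hr).mp ?_⟩
    rw [← hm]; exact h
  · rintro ⟨a, ha⟩
    refine le_trans ((aux_le_mu j _ hr).mpr ha) (le_csSup hbdd ⟨a, ?_, rfl⟩)
    intro h
    rw [h] at ha
    simp at ha

lemma aux_CB (hr : 1 ≤ S.rX) : S.CayleyBacharach ↔ ∀ j, ∀ sj, S.IsSocle j sj → sj ≠ 0 →
    ∃ a, (Pi.single j (a * sj) : S.Gamma) ∉ S.V (S.rX - 1) := by
  unfold CayleyBacharach CBP
  rw [Nat.sub_add_cancel hr]
  refine forall_congr' fun j => ?_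
  constructor
  · intro h sj hs h0
    refine (aux_le_muY j sj hr h0).mp (h.trans (Nat.sInf_le ⟨sj, hs, h0, rfl⟩))
  · intro h
    obtain ⟨s0, hs0, hne⟩ := aux_socle S j
    refine le_csInf ⟨_, s0, hs0, hne, rfl⟩ ?_
    rintro m ⟨sj, hs, h0, rfl⟩
    exact (aux_le_muY j sj hr h0).mpr (h sj hs h0)

lemma aux_forward (hτ : S.IsTraceFamily τ) (hr : 1 ≤ S.rX) (h : S.AlmostGorenstein τ) :
    S.NearlyGorenstein τ ∧ S.CayleyBacharach := by
  obtain ⟨g, hg, hinj, hm⟩ := h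
  have hinj' : ∀ x : S.Gamma, x * g = 0 → x = 0 := fun x hx =>
    hinj S.rX x (by rw [S.aux_rX _ le_rfl]; trivial) hx
  have hi : Function.Injective (LinearMap.mulRight K g : S.Gamma →ₗ[K] S.Gamma) := by
    rw [injective_iff_map_eq_zero]
    intro x hx
    exact hinj' x (by simpa using hx)
  obtain ⟨u, hu⟩ := (LinearMap.injective_iff_surjective.mp hi) 1
  have hu : u * g = 1 := by simpa using hu
  constructor
  · intro i hi1 x hx
    lift i to ℕ using (by omega)
    rw [aux_Vz_nat] at hx
    have hd : x * u ∈ S.delta τ (i + S.rX) := by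
      rw [aux_mem_delta]
      intro k h hk
      obtain ⟨v, hv, hv'⟩ := hm i (by omega) x hx k h hk
      have hv' : v * g = x * h := by simpa using hv'
      have : x * u * h = v := by
        calc x * u * h = u * (x * h) := by ring
          _ = v * (u * g) := by rw [← hv']; ring
          _ = v := by rw [hu, mul_one]
      rw [this]
      have e : (i : ℤ) + S.rX + k = i + k + S.rX := by ring
      rw [e]
      exact hv
    have hx' : x = x * u * g := by rw [mul_assoc, hu, mul_one]
    rw [hx']
    unfold trC
    refine Submodule.mem_iSup_of_mem (i + S.rX : ℤ) (Submodule.mem_iSup_of_mem (-(S.rX : ℤ))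
      (Submodule.mem_iSup_of_mem (by ring) (Submodule.mul_mem_mul hd hg)))
  · rw [aux_CB hr]
    intro j sj hs h0
    by_contra! hcon
    rw [aux_mem_C_r hr] at hg
    have h1 : g j * sj = 0 := by
      apply aux_tau_nondeg hτ j
      intro a
      rw [← hg _ (hcon a), aux_T_mul_single]
      congr 1; ring
    have hj : u j * g j = 1 := congr_fun hu j
    apply h0
    calc sj = u j * g j * sj := by rw [hj, one_mul]
      _ = 0 := by rw [mul_assoc, h1, mul_zero]

lemma aux_exists_g (hτ : S.IsTraceFamily τ) (hΔ : S.degX - S.HF (S.rX - 1) = 1) :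
    ∃ g ∈ S.Cmod τ (-(S.rX : ℤ)), g ≠ 0 ∧
      ∀ h ∈ S.Cmod τ (-(S.rX : ℤ)), ∃ c : K, h = c • g := by
  have hr := S.aux_rX_pos hΔ
  have hlt : S.V (S.rX - 1) < ⊤ := by
    rw [lt_top_iff_ne_top]
    intro h
    have := S.aux_HF_top h
    omega
  obtain ⟨z, -, hz⟩ := SetLike.exists_of_lt hlt
  obtain ⟨φ, hφ, hφV⟩ := Submodule.exists_le_ker_of_lt_top _ hlt
  obtain ⟨g, hg⟩ := aux_T_surj hτ φ
  have hgC : g ∈ S.Cmod τ (-(S.rX : ℤ)) := by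
    rw [aux_mem_C_r hr]
    intro x hx
    rw [hg]
    exact hφV hx
  have hg0 : g ≠ 0 := by
    rintro rfl
    apply hφ
    refine LinearMap.ext fun x => ?_
    rw [← hg]; simp
  have hφz : φ z ≠ 0 := by
    intro h0
    apply hφ
    refine LinearMap.ext fun x => ?_
    obtain ⟨v, hv, c, rfl⟩ := S.aux_codim hΔ hz x
    have : φ v = 0 := hφV hv
    simp [this, h0]
  refine ⟨g, hgC, hg0, fun h hh => ⟨S.Ttot τ (h * z) / φ z, ?_⟩⟩
  rw [← sub_eq_zero]
  apply aux_T_nondeg hτ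
  intro x
  obtain ⟨v, hv, c, rfl⟩ := S.aux_codim hΔ hz x
  rw [aux_mem_C_r hr] at hh
  have : φ v = 0 := hφV hv
  simp [mul_add, sub_mul, hh v hv, hg, this]
  field_simp
  simp

lemma aux_backward (hτ : S.IsTraceFamily τ) (hΔ : S.degX - S.HF (S.rX - 1) = 1)
    (hN : S.NearlyGorenstein τ) (hCB : S.CayleyBacharach) : S.AlmostGorenstein τ := by
  have hr := S.aux_rX_pos hΔ
  rw [aux_CB hr] at hCB
  obtain ⟨g, hg, hg0, hspan⟩ := aux_exists_g hτ hΔ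
  have hgr := (aux_mem_C_r hr).mp hg
  have hunit : ∀ j, IsUnit (g j) := by
    intro j
    by_contra hnu
    have hmem : g j ∈ IsLocalRing.maximalIdeal (S.pt j).carrier := hnu
    obtain ⟨sj, hs, h0⟩ := aux_socle S j
    obtain ⟨a, ha⟩ := hCB j sj hs h0
    apply hg0
    apply aux_T_nondeg hτ
    intro x
    obtain ⟨v, hv, c, rfl⟩ := S.aux_codim hΔ ha x
    have h1 : g j * (a * sj) = 0 := by
      rw [mul_left_comm, mul_comm (g j), hs _ hmem, mul_zero]
    rw [mul_add, map_add, hgr v hv, mul_smul_comm, map_smul, aux_T_mul_single, h1]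
    simp
  choose u hu using fun j => (hunit j).exists_left_inv
  have hug : (u : S.Gamma) * g = 1 := funext hu
  have hdel : ∀ a : ℤ, ∀ f ∈ S.delta τ a, f * g ∈ S.Vz (a - S.rX) := by
    intro a f hf
    exact aux_mem_delta.mp hf _ g hg
  -- the key: multiplication by degree one elements
  have key : ∀ x ∈ S.V 1, ∀ k : ℤ, ∀ h ∈ S.Cmod τ k, x * h * u ∈ S.Vz (1 + k + S.rX) := by
    by_cases hbot : S.delta τ S.rX = ⊥
    · intro x hx k h hh
      have hx1 : x ∈ S.Vz 1 := by
        have := S.aux_Vz_nat 1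
        rw [Nat.cast_one] at this
        rwa [this]
      have hle : S.trC τ 1 ≤ Submodule.comap (LinearMap.mulRight K (h * u : S.Gamma))
          (S.Vz (1 + k + S.rX)) := by
        unfold trC
        refine iSup_le fun a => iSup_le fun b => iSup_le fun hab => ?_
        rw [Submodule.mul_le]
        intro f hf c hc
        rw [Submodule.mem_comap]
        change f * c * (h * u) ∈ _
        by_cases hb : b < -(S.rX : ℤ)
        · rw [aux_C_bot hτ hb hc]; simp
        by_cases ha : a < S.rX
        · have h1 := hdel a f hf
          rw [S.aux_Vz_neg (by omega), Submodule.mem_bot] at h1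
          have : f = f * g * u := by rw [mul_assoc, mul_comm g, hug, mul_one]
          rw [this, h1]; simp
        by_cases ha' : a = S.rX
        · rw [ha', hbot, Submodule.mem_bot] at hf
          rw [hf]; simp
        have ea : a = S.rX + 1 := by omega
        have eb : b = -(S.rX : ℤ) := by omega
        subst eb
        obtain ⟨t, rfl⟩ := hspan c hc
        have e : f * (t • g) * (h * u) = t • (f * h) := by
          calc f * (t • g) * (h * u) = t • (f * h * (u * g)) := by
                rw [mul_smul_comm, smul_mul_assoc]; congr 1; ring
            _ = t • (f * h) := by rw [hug, mul_one]
        rw [e]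
        apply Submodule.smul_mem
        have := aux_mem_delta.mp hf k h hh
        convert this using 2
        rw [ea]; ring
      have := hle (hN 1 le_rfl hx1)
      rw [Submodule.mem_comap] at this
      rw [mul_assoc]
      exact this
    · obtain ⟨f, hf, hf0⟩ := Submodule.exists_mem_ne_zero_of_ne_bot hbot
      have h1 := hdel _ f hf
      rw [sub_self] at h1
      have h2 : f * g ∈ S.V 0 := by simpa [Vz] using h1
      obtain ⟨c, hc⟩ := S.aux_V_zero h2
      have hfu : f = c • u := by
        calc f = f * g * u := by rw [mul_assoc, mul_comm g, hug, mul_one]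
          _ = c • u := by rw [hc, smul_mul_assoc, one_mul]
      have hc0 : c ≠ 0 := by
        rintro rfl
        exact hf0 (by rw [hfu, zero_smul])
      have hud : (u : S.Gamma) ∈ S.delta τ S.rX := by
        rw [hfu] at hf
        exact (Submodule.smul_mem_iff _ hc0).mp hf
      intro x hx k h hh
      have h3 := aux_mem_delta.mp hud k h hh
      have hx1 : x ∈ S.Vz 1 := by
        have := S.aux_Vz_nat 1
        rw [Nat.cast_one] at this
        rwa [this]
      have h4 := S.aux_Vz_mul hx1 h3
      have e1 : x * h * u = x * (u * h) := by ring
      have e2 : 1 + k + (S.rX : ℤ) = 1 + (S.rX + k) := by ring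
      rw [e1, e2]
      exact h4
  refine ⟨g, hg, ?_, ?_⟩
  · intro i x _ hx
    calc x = x * g * u := by rw [mul_assoc, mul_comm g, hug, mul_one]
      _ = 0 := by rw [hx, zero_mul]
  · intro a ha x hx k h hh
    refine ⟨x * h * u, ?_, ?_⟩
    · obtain ⟨m, rfl⟩ := Nat.exists_eq_add_of_le' ha
      have hle : S.V m * S.V 1 ≤ Submodule.comap (LinearMap.mulRight K (h * u : S.Gamma))
          (S.Vz (((m + 1 : ℕ) : ℤ) + k + S.rX)) := by
        rw [Submodule.mul_le]
        intro y hy w hw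
        rw [Submodule.mem_comap]
        rw [← aux_Vz_nat] at hy
        have := S.aux_Vz_mul hy (key w hw k h hh)
        convert this using 2
        · push_cast; ring
        · change y * w * (h * u) = _
          ring
      have := hle (S.aux_V_succ_le m hx)
      rw [Submodule.mem_comap] at this
      rw [mul_assoc]
      exact this
    · change x * h * u * g = x * h
      rw [mul_assoc, hug, mul_one]

end ZeroDimScheme

/-- Proposition 6.8 / `propSec5.5`.  Let `𝕏 ⊆ ℙⁿ_K` be a
0-dimensional locally Gorenstein scheme with `Δ_𝕏 = deg 𝕏 - HF_𝕏(r_𝕏 - 1) = 1`.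
Then `𝕏` is an almost Gorenstein scheme iff `𝕏` is a nearly Gorenstein
Cayley–Bacharach scheme. -/
theorem dedekind_CB_stmt16 (K : Type) [Field K] (n : ℕ) (S : ZeroDimScheme K n)
    (τ : ∀ j, (S.pt j).carrier →ₗ[K] K) (hτ : S.IsTraceFamily τ)
    (hΔ : S.degX - S.HF (S.rX - 1) = 1) :
    S.AlmostGorenstein τ ↔ (S.NearlyGorenstein τ ∧ S.CayleyBacharach) := by
  have hr := S.aux_rX_pos hΔ
  exact ⟨fun h => ZeroDimScheme.aux_forward hτ hr h,
    fun h => ZeroDimScheme.aux_backward hτ hΔ h.1 h.2⟩
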